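/- Assume J positive, strictly decreasing, and 0 < h < ∑_{n=1}^{N-1} J(n). For every η with H(η) < H(-1), one has Φ(-1, +1) ≤ Φ(-1, η); consequently the stability level of the all-minus configuration equals Φ(-1, +1) - H(-1). -/

import Mathlib

open Finset

/-- Long-range Ising Hamiltonian with free boundary conditions on {0,...,N-1}:
`H(σ) = -∑_{i<j} J(|i-j|) σᵢ σⱼ - h ∑ᵢ σᵢ`. -/
noncomputable def H (N : ℕ) (J : ℕ → ℝ) (h : ℝ) (σ : Fin N → ℝ) : ℝ :=
  -(∑ i : Fin N, ∑ j : Fin N,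
      if (i : ℕ) < (j : ℕ) then J (Nat.dist (i : ℕ) (j : ℕ)) * σ i * σ j else 0)
    - h * ∑ i : Fin N, σ i

/-- A spin configuration takes values in {-1, +1}. -/
def IsConfig {N : ℕ} (σ : Fin N → ℝ) : Prop := ∀ i, σ i = 1 ∨ σ i = -1

/-- The configuration `L^(k)`: +1 on the first k sites, -1 elsewhere. -/
def Lconf (N k : ℕ) : Fin N → ℝ := fun i => if (i : ℕ) < k then 1 else -1

/-- The configuration `R^(k)`: +1 on the last k sites, -1 elsewhere. -/
def Rconf (N k : ℕ) : Fin N → ℝ := fun i => if N - k ≤ (i : ℕ) then 1 else -1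

/-- Two configurations related by a single spin flip. -/
def IsFlip {N : ℕ} (a b : Fin N → ℝ) : Prop := ∃ i, b = Function.update a i (-(a i))

/-- A path of configurations joining σ to η, changing one spin at a time. -/
def IsPathFrom {N : ℕ} (γ : List (Fin N → ℝ)) (σ η : Fin N → ℝ) : Prop :=
  γ ≠ [] ∧ γ.head? = some σ ∧ γ.getLast? = some η ∧ (∀ τ ∈ γ, IsConfig τ) ∧
    List.Chain' IsFlip γ

/-- Communication height: minimal over paths from σ to η of the maximal energy along the path. -/
noncomputable def Phi (N : ℕ) (J : ℕ → ℝ) (h : ℝ) (σ η : Fin N → ℝ) : ℝ :=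
  sInf {x | ∃ γ : List (Fin N → ℝ), IsPathFrom γ σ η ∧
    x = (γ.map (H N J h)).foldr max (H N J h σ)}

/-!
Among the configurations with a given number of plus spins, those in which the plus spins form an
interval at one end of the chain minimise the energy: if `J` is decreasing, the spins of a set of
given size are coupled most strongly when they are contiguous, and `L^(k)` and its complement are
both contiguous. Hence a path from `-1` to `η` has to climb, for every `k` up to the number `m` of
plus spins of `η`, at least to the energy `F(k)` of `L^(k)`. The path `L^(0), …, L^(N)` from `-1`
to `+1` climbs to `max F` only. Since
`F(k+1) - F(k) = 2 (∑_{n ≤ N-k-1} J(n) - ∑_{n ≤ k} J(n) - h)` is decreasing in `k`, the sequence `F`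
is concave; as `F(m) ≤ H(η) < H(-1) = F(0)`, it stays below `F(0)` from `m` on, so that its maximum
is attained at some `k ≤ m`.
-/

section Coupling

variable {M : Type*} [AddCommMonoid M] {J : ℕ → M}

/-- `J(1) + ⋯ + J(k)`: the coupling of a site with the `k` contiguous sites next to it. -/
def siteCoupling (J : ℕ → M) (k : ℕ) : M := ∑ n ∈ Icc 1 k, J n

/-- The total coupling inside an interval of `k` sites, built up by adding one site at a time at
the right end. -/
def intervalCoupling (J : ℕ → M) (k : ℕ) : M := ∑ m ∈ range k, siteCoupling J m

/-- The total coupling inside a finite set of sites, each pair counted once. -/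
def setCoupling (J : ℕ → M) (A : Finset ℕ) : M := ∑ j ∈ A, ∑ i ∈ A with i < j, J (j - i)

lemma siteCoupling_succ (k : ℕ) : siteCoupling J (k + 1) = siteCoupling J k + J (k + 1) :=
  sum_Icc_succ_top (by lia) J

lemma intervalCoupling_succ (k : ℕ) :
    intervalCoupling J (k + 1) = intervalCoupling J k + siteCoupling J k :=
  sum_range_succ _ k

lemma setCoupling_insert_of_forall_lt {a : ℕ} {s : Finset ℕ} (hs : ∀ i ∈ s, i < a) :
    setCoupling J (insert a s) = setCoupling J s + ∑ i ∈ s, J (a - i) := by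
  have ha : a ∉ s := fun h ↦ (hs a h).false
  have pairs_with_a : {i ∈ insert a s | i < a} = s := by
    rw [filter_insert, if_neg (lt_irrefl a), filter_true_of_mem hs]
  have pairs_in_s : ∀ j ∈ s, {i ∈ insert a s | i < j} = {i ∈ s | i < j} := fun j hj ↦ by
    rw [filter_insert, if_neg (hs j hj).not_gt]
  rw [setCoupling, sum_insert ha, pairs_with_a, add_comm, setCoupling]
  congr 1
  exact sum_congr rfl fun j hj ↦ by rw [pairs_in_s j hj]

lemma setCoupling_Ico {a b : ℕ} (hab : a ≤ b) :
    setCoupling J (Ico a b) = intervalCoupling J (b - a) := by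
  induction b, hab using Nat.le_induction with
  | base => simp [setCoupling, intervalCoupling]
  | succ b hab ih =>
    rw [← insert_Ico_right_eq_Ico_add_one hab,
      setCoupling_insert_of_forall_lt fun i hi ↦ (mem_Ico.1 hi).2, ih, sum_Ico_reflect J a (by lia),
      Nat.sub_add_comm hab, intervalCoupling_succ, Nat.add_sub_cancel_left]
    rfl

lemma setCoupling_map_val {N : ℕ} (P : Finset (Fin N)) :
    setCoupling J (P.map Fin.valEmbedding) = ∑ i : Fin N, ∑ j : Fin N,
      if j ∈ P ∧ i ∈ P ∧ (i : ℕ) < j then J (Nat.dist i j) else 0 := by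
  rw [sum_comm]
  simp only [setCoupling, sum_map, sum_filter, Fin.valEmbedding_apply, ite_and, sum_ite_irrel,
    sum_const_zero, sum_ite_mem, univ_inter]
  exact sum_congr rfl fun j _ ↦ sum_congr rfl fun i _ ↦
    ite_congr rfl (fun hij ↦ by rw [Nat.dist_eq_sub_of_le (le_of_lt hij)]) fun _ ↦ rfl

lemma sum_coupling_eq_intervalCoupling (N : ℕ) :
    (∑ i : Fin N, ∑ j : Fin N, if (i : ℕ) < j then J (Nat.dist i j) else 0) =
      intervalCoupling J N := by
  have total := setCoupling_map_val (J := J) (univ : Finset (Fin N))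
  rw [Fin.map_valEmbedding_univ, Nat.Iio_eq_range, range_eq_Ico,
    setCoupling_Ico N.zero_le] at total
  simpa using total.symm

variable [PartialOrder M] [IsOrderedAddMonoid M]

lemma monotone_siteCoupling (hJ : ∀ n, 1 ≤ n → 0 ≤ J n) : Monotone (siteCoupling J) :=
  monotone_nat_of_le_succ fun k ↦ by
    rw [siteCoupling_succ]
    exact le_add_of_nonneg_right (hJ _ (by lia))

lemma sum_le_siteCoupling_card (hJ : AntitoneOn J (Set.Ici 1)) {B : Finset ℕ}
    (hB : ∀ n ∈ B, 1 ≤ n) : ∑ n ∈ B, J n ≤ siteCoupling J #B := by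
  induction B using Finset.induction_on_max with
  | empty => simp [siteCoupling]
  | insert a s hs ih =>
    have ha : a ∉ s := fun h ↦ (hs a h).false
    obtain ⟨ha_pos, hs_pos⟩ := forall_mem_insert _ _ _ |>.1 hB
    have card_lt : #s + 1 ≤ a := by
      have : #s ≤ #(Ico 1 a) := card_le_card fun n hn ↦ mem_Ico.2 ⟨hs_pos n hn, hs n hn⟩
      rw [Nat.card_Ico] at this
      lia
    rw [sum_insert ha, card_insert_of_notMem ha, siteCoupling_succ, add_comm]
    exact add_le_add (ih hs_pos) (hJ (Set.mem_Ici.2 (by lia)) ha_pos card_lt)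

lemma setCoupling_le_intervalCoupling_card (hJ : AntitoneOn J (Set.Ici 1)) (A : Finset ℕ) :
    setCoupling J A ≤ intervalCoupling J #A := by
  induction A using Finset.induction_on_max with
  | empty => simp [setCoupling, intervalCoupling]
  | insert a s hs ih =>
    have dist_injOn : Set.InjOn (a - ·) (s : Set ℕ) := fun i hi j hj hij ↦ by
      have := hs i hi
      have := hs j hj
      lia
    have coupling_with_a : ∑ i ∈ s, J (a - i) ≤ siteCoupling J #s := by
      rw [← sum_image dist_injOn, ← card_image_of_injOn dist_injOn]
      refine sum_le_siteCoupling_card hJ (forall_mem_image.2 fun i hi ↦ ?_)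
      have := hs i hi
      lia
    rw [setCoupling_insert_of_forall_lt hs, card_insert_of_notMem fun h ↦ (hs a h).false,
      intervalCoupling_succ]
    exact add_le_add ih coupling_with_a

end Coupling

lemma le_of_antitone_sub_of_lt {α : Type*} [AddCommGroup α] [LinearOrder α] [IsOrderedAddMonoid α]
    {f : ℕ → α} (hf : Antitone fun k ↦ f (k + 1) - f k) {m k : ℕ} (hm : f m < f 0) (hmk : m ≤ k) :
    f k ≤ f m := by
  obtain ⟨i, hi, hdecr⟩ : ∃ i ∈ range m, f (i + 1) - f i < 0 := by
    refine exists_lt_of_sum_lt ?_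
    rwa [sum_range_sub, sum_const_zero, sub_neg]
  have him : i ≤ m := (mem_range.1 hi).le
  exact antitoneOn_nat_Ici_of_succ_le (k := i)
    (fun n hn ↦ sub_nonpos.1 ((hf hn).trans hdecr.le)) him (him.trans hmk) hmk

lemma exists_mem_eq_of_isChain {α : Type*} {f : α → ℕ} {k : ℕ} {b : α} (hb : k ≤ f b)
    {l : List α} (hl : l.IsChain fun x y ↦ f y ≤ f x + 1) (hlast : l.getLast? = some b) {a : α}
    (hhead : l.head? = some a) (ha : f a ≤ k) : ∃ x ∈ l, f x = k := by
  induction l generalizing a with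
  | nil => simp at hhead
  | cons x l ih =>
    obtain rfl : x = a := by simpa using hhead
    rcases ha.eq_or_lt with hx | hx
    · exact ⟨x, List.mem_cons_self, hx⟩
    cases l with
    | nil =>
      obtain rfl : x = b := by simpa using hlast
      lia
    | cons y l =>
      obtain ⟨hxy, hl⟩ := List.isChain_cons_cons.1 hl
      obtain ⟨z, hz, hzk⟩ := ih hl (by simpa using hlast) List.head?_cons (by lia)
      exact ⟨z, List.mem_cons_of_mem _ hz, hzk⟩

section Energy

variable {N : ℕ} {J : ℕ → ℝ} {h : ℝ} {σ η : Fin N → ℝ} {k : ℕ}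

/-- The set of sites carrying a plus spin. -/
noncomputable def plusSites (σ : Fin N → ℝ) : Finset (Fin N) := {i | σ i = 1}

lemma mem_plusSites {i : Fin N} : i ∈ plusSites σ ↔ σ i = 1 := by simp [plusSites]

lemma plusSites_minus : plusSites (fun _ : Fin N ↦ (-1 : ℝ)) = ∅ := by
  simp only [plusSites]
  norm_num

lemma IsFlip.card_plusSites_le (hflip : IsFlip σ η) : #(plusSites η) ≤ #(plusSites σ) + 1 := by
  obtain ⟨i, rfl⟩ := hflip
  refine (card_le_card fun j hj ↦ ?_).trans (card_insert_le i _)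
  rcases eq_or_ne j i with rfl | hji
  · exact mem_insert_self _ _
  · rw [mem_plusSites, Function.update_of_ne hji] at hj
    exact mem_insert_of_mem (mem_plusSites.2 hj)

lemma IsConfig.sum_eq_card_plusSites (hσ : IsConfig σ) : ∑ i, σ i = 2 * #(plusSites σ) - N := by
  have spin_eq : ∀ i, σ i = 2 * (if σ i = 1 then 1 else 0) - 1 := fun i ↦ by
    rcases hσ i with hi | hi <;> rw [hi] <;> norm_num
  rw [sum_congr rfl fun i _ ↦ spin_eq i, sum_sub_distrib, ← mul_sum]
  simp [plusSites]

lemma IsConfig.H_eq_setCoupling (hσ : IsConfig σ) :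
    H N J h σ = intervalCoupling J N - 2 * setCoupling J ((plusSites σ).map Fin.valEmbedding)
      - 2 * setCoupling J ((plusSites σ)ᶜ.map Fin.valEmbedding)
      - h * (2 * #(plusSites σ) - N) := by
  rw [H, hσ.sum_eq_card_plusSites, ← sum_coupling_eq_intervalCoupling, setCoupling_map_val,
    setCoupling_map_val]
  simp only [mul_sum, ← sum_sub_distrib, ← sum_neg_distrib, mem_compl, mem_plusSites]
  congr 1
  refine sum_congr rfl fun i _ ↦ sum_congr rfl fun j _ ↦ ?_
  -- `σ i * σ j + 1` is `2` if both spins are plus or both are minus, and `0` otherwise.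
  by_cases hij : (i : ℕ) < j
  · rcases hσ i with hi | hi <;> rcases hσ j with hj | hj <;> rw [hi, hj] <;> norm_num [hij] <;>
      ring
  · simp [hij]

/-- The energy of a configuration whose plus spins form an interval of `k` sites at one end of the
chain. The subtraction `N - k` is truncated, so only the values at `k ≤ N` are energies. -/
noncomputable def dropletEnergy (N : ℕ) (J : ℕ → ℝ) (h : ℝ) (k : ℕ) : ℝ :=
  intervalCoupling J N - 2 * intervalCoupling J k - 2 * intervalCoupling J (N - k)
    - h * (2 * k - N)

lemma dropletEnergy_succ_sub (k : ℕ) :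
    dropletEnergy N J h (k + 1) - dropletEnergy N J h k =
      2 * (siteCoupling J (N - k - 1) - siteCoupling J k - h) := by
  have complement_step : intervalCoupling J (N - k) =
      intervalCoupling J (N - (k + 1)) + siteCoupling J (N - k - 1) := by
    rcases lt_or_ge k N with hk | hk
    · rw [← Nat.sub_sub, ← intervalCoupling_succ, Nat.sub_add_cancel (by lia)]
    · simp [Nat.sub_eq_zero_of_le hk, Nat.sub_eq_zero_of_le (hk.trans k.le_succ),
        siteCoupling]
  rw [dropletEnergy, dropletEnergy, complement_step, intervalCoupling_succ]
  push_cast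
  ring

lemma antitone_dropletEnergy_succ_sub (hJ : ∀ n, 1 ≤ n → 0 ≤ J n) :
    Antitone fun k ↦ dropletEnergy N J h (k + 1) - dropletEnergy N J h k := by
  intro k l hkl
  have hplus : siteCoupling J k ≤ siteCoupling J l := monotone_siteCoupling hJ hkl
  have hminus : siteCoupling J (N - l - 1) ≤ siteCoupling J (N - k - 1) :=
    monotone_siteCoupling hJ (by lia)
  simp only [dropletEnergy_succ_sub]
  linarith

lemma IsConfig.dropletEnergy_card_plusSites_le_H (hσ : IsConfig σ)
    (hJ : AntitoneOn J (Set.Ici 1)) : dropletEnergy N J h #(plusSites σ) ≤ H N J h σ := by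
  have hplus := setCoupling_le_intervalCoupling_card hJ ((plusSites σ).map Fin.valEmbedding)
  have hminus := setCoupling_le_intervalCoupling_card hJ ((plusSites σ)ᶜ.map Fin.valEmbedding)
  rw [card_map] at hplus
  rw [card_map, card_compl, Fintype.card_fin] at hminus
  rw [hσ.H_eq_setCoupling, dropletEnergy]
  linarith

lemma isConfig_Lconf (N k : ℕ) : IsConfig (Lconf N k) := fun i ↦ by
  unfold Lconf
  split_ifs <;> simp

lemma Lconf_zero : Lconf N 0 = fun _ ↦ -1 := by ext; simp [Lconf]

lemma mem_plusSites_Lconf {i : Fin N} : i ∈ plusSites (Lconf N k) ↔ (i : ℕ) < k := by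
  rw [mem_plusSites, Lconf]
  split_ifs with hi <;> norm_num [hi]

lemma H_Lconf (hk : k ≤ N) : H N J h (Lconf N k) = dropletEnergy N J h k := by
  have plus_eq : (plusSites (Lconf N k)).map Fin.valEmbedding = Ico 0 k := by
    ext x
    simp only [mem_map, mem_plusSites_Lconf, Fin.valEmbedding_apply, mem_Ico, zero_le, true_and]
    exact ⟨by rintro ⟨i, hi, rfl⟩; exact hi, fun hx ↦ ⟨⟨x, by lia⟩, hx, rfl⟩⟩
  have minus_eq : (plusSites (Lconf N k))ᶜ.map Fin.valEmbedding = Ico k N := by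
    ext x
    simp only [mem_map, mem_compl, mem_plusSites_Lconf, Fin.valEmbedding_apply, mem_Ico, not_lt]
    exact ⟨by rintro ⟨i, hi, rfl⟩; exact ⟨hi, i.2⟩, fun hx ↦ ⟨⟨x, hx.2⟩, hx.1, rfl⟩⟩
  have card_eq : #(plusSites (Lconf N k)) = k := by
    rw [← card_map Fin.valEmbedding, plus_eq, Nat.card_Ico, Nat.sub_zero]
  rw [(isConfig_Lconf N k).H_eq_setCoupling, plus_eq, minus_eq, card_eq, setCoupling_Ico k.zero_le,
    setCoupling_Ico hk, dropletEnergy, Nat.sub_zero]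

lemma H_plus_lt_H_minus (hN : N ≠ 0) (hh : 0 < h) :
    H N J h (fun _ ↦ 1) < H N J h (fun _ ↦ -1) := by
  have : 0 < h * N := mul_pos hh (Nat.cast_pos.2 (Nat.pos_of_ne_zero hN))
  simp only [H, mul_one, mul_neg, neg_neg, sum_neg_distrib, sum_const, card_univ,
    Fintype.card_fin, nsmul_eq_mul]
  linarith

end Energy

section Path

variable {N : ℕ} {J : ℕ → ℝ} {h : ℝ} {σ η τ : Fin N → ℝ} {γ : List (Fin N → ℝ)} {k : ℕ}

lemma isPathFrom_singleton (hσ : IsConfig σ) : IsPathFrom [σ] σ σ :=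
  ⟨by simp, by simp, by simp, by simpa using hσ, List.isChain_singleton _⟩

lemma IsPathFrom.concat (hγ : IsPathFrom γ σ η) (hflip : IsFlip η τ) (hτ : IsConfig τ) :
    IsPathFrom (γ ++ [τ]) σ τ := by
  obtain ⟨-, hhead, hlast, hconfig, hchain⟩ := hγ
  refine ⟨by simp, by simp [List.head?_append, hhead], by simp, ?_, ?_⟩
  · exact List.forall_mem_append.2 ⟨hconfig, by simpa using hτ⟩
  · refine hchain.append (List.isChain_singleton _) ?_
    simpa [hlast] using hflip

/-- The configuration that agrees with `η` on the first `k` sites and is `-1` elsewhere. For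
`η = +1` it is `L^(k)`. -/
def truncConf (η : Fin N → ℝ) (k : ℕ) : Fin N → ℝ := fun i ↦ if (i : ℕ) < k then η i else -1

lemma truncConf_zero : truncConf η 0 = fun _ ↦ -1 := by ext; simp [truncConf]

lemma truncConf_self : truncConf η N = η := by ext; simp [truncConf]

lemma isConfig_truncConf (hη : IsConfig η) (k : ℕ) : IsConfig (truncConf η k) := fun i ↦ by
  unfold truncConf
  split_ifs
  · exact hη i
  · exact Or.inr rfl

lemma truncConf_succ (hk : k < N) :
    truncConf η (k + 1) = Function.update (truncConf η k) ⟨k, hk⟩ (η ⟨k, hk⟩) := by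
  funext i
  rcases eq_or_ne i ⟨k, hk⟩ with rfl | hi
  · simp [truncConf]
  · have : (i : ℕ) ≠ k := fun hik ↦ hi (Fin.ext hik)
    have : (i : ℕ) < k + 1 ↔ (i : ℕ) < k := by lia
    simp only [Function.update_of_ne hi, truncConf, this]

lemma truncConf_succ_eq_or_isFlip (hη : IsConfig η) (hk : k < N) :
    truncConf η (k + 1) = truncConf η k ∨ IsFlip (truncConf η k) (truncConf η (k + 1)) := by
  have hminus : truncConf η k ⟨k, hk⟩ = -1 := by simp [truncConf]
  rcases hη ⟨k, hk⟩ with hplus | hkeep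
  · exact Or.inr ⟨⟨k, hk⟩, by rw [truncConf_succ hk, hplus, hminus, neg_neg]⟩
  · exact Or.inl (by rw [truncConf_succ hk, hkeep, ← hminus, Function.update_eq_self])

lemma exists_isPathFrom_truncConf (hη : IsConfig η) (hk : k ≤ N) :
    ∃ γ, IsPathFrom γ (fun _ ↦ -1) (truncConf η k) ∧ ∀ τ ∈ γ, ∃ j ≤ k, τ = truncConf η j := by
  induction k with
  | zero =>
    rw [truncConf_zero]
    refine ⟨_, isPathFrom_singleton fun _ ↦ Or.inr rfl, fun τ hτ ↦ ⟨0, le_rfl, ?_⟩⟩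
    rw [List.mem_singleton.1 hτ, truncConf_zero]
  | succ k ih =>
    obtain ⟨γ, hγ, htrunc⟩ := ih (by lia)
    have htrunc' : ∀ τ ∈ γ, ∃ j ≤ k + 1, τ = truncConf η j := fun τ hτ ↦ by
      obtain ⟨j, hj, rfl⟩ := htrunc τ hτ
      exact ⟨j, hj.trans k.le_succ, rfl⟩
    rcases truncConf_succ_eq_or_isFlip hη hk with heq | hflip
    · exact ⟨γ, heq ▸ hγ, htrunc'⟩
    · refine ⟨_, hγ.concat hflip (isConfig_truncConf hη _), List.forall_mem_append.2 ⟨htrunc', ?_⟩⟩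
      simpa using ⟨k + 1, le_rfl, rfl⟩

lemma Phi_le_of_isPathFrom {E : ℝ} (hγ : IsPathFrom γ σ η) (hE : ∀ τ ∈ γ, H N J h τ ≤ E) :
    Phi N J h σ η ≤ E := by
  have bddBelow : BddBelow {x | ∃ γ : List (Fin N → ℝ), IsPathFrom γ σ η ∧
      x = (γ.map (H N J h)).foldr max (H N J h σ)} := by
    refine ⟨H N J h σ, ?_⟩
    rintro _ ⟨γ, hγ, rfl⟩
    exact List.le_max_of_le' _ (List.mem_map_of_mem (List.mem_of_head? hγ.2.1)) le_rfl
  refine (csInf_le bddBelow ⟨γ, hγ, rfl⟩).trans ?_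
  refine List.foldrRecOn (motive := (· ≤ E)) _ _ ?_ fun b hb x hx ↦ ?_
  · exact hE σ (List.mem_of_head? hγ.2.1)
  · obtain ⟨τ, hτ, rfl⟩ := List.mem_map.1 hx
    exact max_le (hE τ hτ) hb

lemma le_Phi {E : ℝ} (hex : ∃ γ, IsPathFrom γ σ η)
    (hE : ∀ γ, IsPathFrom γ σ η → ∃ τ ∈ γ, E ≤ H N J h τ) : E ≤ Phi N J h σ η := by
  obtain ⟨γ, hγ⟩ := hex
  refine le_csInf ⟨_, γ, hγ, rfl⟩ ?_
  rintro _ ⟨γ', hγ', rfl⟩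
  obtain ⟨τ, hτ, hEτ⟩ := hE γ' hγ'
  exact List.le_max_of_le' _ (List.mem_map_of_mem hτ) hEτ

lemma Phi_minus_plus_le {E : ℝ} (hE : ∀ k ≤ N, dropletEnergy N J h k ≤ E) :
    Phi N J h (fun _ ↦ -1) (fun _ ↦ 1) ≤ E := by
  obtain ⟨γ, hγ, hL⟩ := exists_isPathFrom_truncConf (η := fun _ : Fin N ↦ 1)
    (fun _ ↦ Or.inl rfl) le_rfl
  rw [truncConf_self] at hγ
  refine Phi_le_of_isPathFrom hγ fun τ hτ ↦ ?_
  obtain ⟨k, hk, rfl⟩ := hL τ hτ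
  exact (H_Lconf hk).trans_le (hE k hk)

lemma dropletEnergy_le_Phi (hJ : AntitoneOn J (Set.Ici 1)) (hη : IsConfig η)
    (hk : k ≤ #(plusSites η)) : dropletEnergy N J h k ≤ Phi N J h (fun _ ↦ -1) η := by
  refine le_Phi ?_ fun γ ⟨_, hhead, hlast, hconfig, hchain⟩ ↦ ?_
  · obtain ⟨γ, hγ, -⟩ := exists_isPathFrom_truncConf hη le_rfl
    exact ⟨γ, truncConf_self (η := η) ▸ hγ⟩
  · have card_chain : γ.IsChain fun σ τ ↦ #(plusSites τ) ≤ #(plusSites σ) + 1 :=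
      List.IsChain.imp (R := IsFlip) (fun _ _ ↦ IsFlip.card_plusSites_le) hchain
    have card_minus_le : #(plusSites fun _ : Fin N ↦ (-1 : ℝ)) ≤ k := by simp [plusSites_minus]
    obtain ⟨τ, hτ, rfl⟩ := exists_mem_eq_of_isChain (f := fun σ ↦ #(plusSites σ)) hk
      card_chain hlast hhead card_minus_le
    exact ⟨τ, hτ, (hconfig τ hτ).dropletEnergy_card_plusSites_le_H hJ⟩

lemma Phi_minus_plus_le_Phi (hnonneg : ∀ n, 1 ≤ n → 0 ≤ J n) (hanti : AntitoneOn J (Set.Ici 1))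
    (hη : IsConfig η) (hlt : H N J h η < H N J h (fun _ ↦ -1)) :
    Phi N J h (fun _ ↦ -1) (fun _ ↦ 1) ≤ Phi N J h (fun _ ↦ -1) η := by
  set F := dropletEnergy N J h
  obtain ⟨k, hk, hmax⟩ := exists_max_image (range (N + 1)) F nonempty_range_add_one
  have card_lt : F #(plusSites η) < F 0 := by
    rw [← Lconf_zero, H_Lconf N.zero_le] at hlt
    exact (hη.dropletEnergy_card_plusSites_le_H hanti).trans_lt hlt
  have k_le : k ≤ #(plusSites η) := by
    by_contra! hgt
    have : F k ≤ F #(plusSites η) :=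
      le_of_antitone_sub_of_lt (antitone_dropletEnergy_succ_sub hnonneg) card_lt hgt.le
    exact (this.trans_lt card_lt).not_ge (hmax 0 (by simp))
  calc Phi N J h (fun _ ↦ -1) (fun _ ↦ 1)
      ≤ F k := Phi_minus_plus_le fun j hj ↦ hmax j (mem_range_succ_iff.2 hj)
    _ ≤ Phi N J h (fun _ ↦ -1) η := dropletEnergy_le_Phi hanti hη k_le

end Path

theorem stability_level_of_minus_general {N : ℕ} (hN : N ≠ 0) {J : ℕ → ℝ}
    (hnonneg : ∀ n, 1 ≤ n → 0 ≤ J n) (hanti : AntitoneOn J (Set.Ici 1)) {h : ℝ} (hh : 0 < h) :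
    (∀ η : Fin N → ℝ, IsConfig η → H N J h η < H N J h (fun _ ↦ -1) →
      Phi N J h (fun _ ↦ -1) (fun _ ↦ 1) ≤ Phi N J h (fun _ ↦ -1) η) ∧
    (sInf {x | ∃ η : Fin N → ℝ, IsConfig η ∧ H N J h η < H N J h (fun _ ↦ -1) ∧
          x = Phi N J h (fun _ ↦ -1) η}
        - H N J h (fun _ ↦ -1)
      = Phi N J h (fun _ ↦ -1) (fun _ ↦ 1) - H N J h (fun _ ↦ -1)) := by
  have minimal : ∀ η : Fin N → ℝ, IsConfig η → H N J h η < H N J h (fun _ ↦ -1) →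
      Phi N J h (fun _ ↦ -1) (fun _ ↦ 1) ≤ Phi N J h (fun _ ↦ -1) η :=
    fun _ hη hlt ↦ Phi_minus_plus_le_Phi hnonneg hanti hη hlt
  refine ⟨minimal, congrArg (· - _) (IsLeast.csInf_eq ⟨?_, ?_⟩)⟩
  · exact ⟨fun _ ↦ 1, fun _ ↦ Or.inl rfl, H_plus_lt_H_minus hN hh, rfl⟩
  · rintro _ ⟨η, hη, hlt, rfl⟩
    exact minimal η hη hlt

/-- Theorem 3.1(2), key step: for every configuration `η` with `H(η) < H(-1)` one has
`Φ(-1,+1) ≤ Φ(-1,η)`; consequently the stability level of the all-minus configuration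
equals `Φ(-1,+1) - H(-1)`. -/
theorem stability_level_of_minus (N : ℕ) (hN : 2 ≤ N) (J : ℕ → ℝ)
    (hpos : ∀ n, 1 ≤ n → 0 < J n) (hdec : ∀ n, 1 ≤ n → J (n + 1) < J n)
    (h : ℝ) (hh0 : 0 < h) (hh1 : h < ∑ n ∈ Finset.Icc 1 (N - 1), J n) :
    (∀ η : Fin N → ℝ, IsConfig η → H N J h η < H N J h (fun _ => -1) →
      Phi N J h (fun _ => -1) (fun _ => 1) ≤ Phi N J h (fun _ => -1) η) ∧
    (sInf {x | ∃ η : Fin N → ℝ, IsConfig η ∧ H N J h η < H N J h (fun _ => -1) ∧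
          x = Phi N J h (fun _ => -1) η}
        - H N J h (fun _ => -1)
      = Phi N J h (fun _ => -1) (fun _ => 1) - H N J h (fun _ => -1)) := by
  exact stability_level_of_minus_general (by lia) (fun n hn ↦ (hpos n hn).le)
    (antitoneOn_nat_Ici_of_succ_le fun n hn ↦ (hdec n hn).le) hh0
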